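/- Let y ∈ V^n be a probability vector with positive components, let λ ∈ (0,1), and let k be a positive integer. The following three statements are equivalent: (1) T_k^λ(y) = S^λ(y); (2) M_k^λ(y) = S^λ(y); (3) y_{d+1}^k ≤ y_n^{k−1} y_d for every d with 0 < d < n−1. -/

import Mathlib

noncomputable section

/-- `eSum x l` : the sum of the `l` largest components of `x`. -/
def eSum {n : ℕ} (x : Fin n → ℝ) (l : ℕ) : ℝ :=
  sSup {r | ∃ s : Finset (Fin n), s.card = l ∧ r = ∑ i ∈ s, x i}

/-- `ESum x l` : the sum of the `l` smallest components of `x`. -/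
def ESum {n : ℕ} (x : Fin n → ℝ) (l : ℕ) : ℝ :=
  sInf {r | ∃ s : Finset (Fin n), s.card = l ∧ r = ∑ i ∈ s, x i}

/-- Majorization `x ≺ y` (for vectors with equal total sum):
`e_l(x) ≤ e_l(y)` for all `1 ≤ l ≤ n`. -/
def Maj {n : ℕ} (x y : Fin n → ℝ) : Prop :=
  (∑ i, x i) = (∑ i, y i) ∧ ∀ l : ℕ, 1 ≤ l → l ≤ n → eSum x l ≤ eSum y l

/-- Strict majorization `x ◁ y`: equal total sums and `e_l(x) < e_l(y)` for all
`1 ≤ l ≤ n - 1`. -/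
def SMaj {n : ℕ} (x y : Fin n → ℝ) : Prop :=
  (∑ i, x i) = (∑ i, y i) ∧ ∀ l : ℕ, 1 ≤ l → l + 1 ≤ n → eSum x l < eSum y l

/-- Super-majorization `x ≺ʷ y` : `E_l(x) ≥ E_l(y)` for all `1 ≤ l ≤ n`. -/
def SupMaj {n : ℕ} (x y : Fin n → ℝ) : Prop :=
  ∀ l : ℕ, 1 ≤ l → l ≤ n → ESum y l ≤ ESum x l

/-- Strict super-majorization `x ◁ʷ y` : `E_l(x) > E_l(y)` for all `1 ≤ l ≤ n`. -/
def SSupMaj {n : ℕ} (x y : Fin n → ℝ) : Prop :=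
  ∀ l : ℕ, 1 ≤ l → l ≤ n → ESum y l < ESum x l

/-- Tensor product of two vectors: the vector of all pairwise products. -/
def tensor {m k : ℕ} (x : Fin m → ℝ) (c : Fin k → ℝ) : Fin (m * k) → ℝ :=
  fun i => x (finProdFinEquiv.symm i).1 * c (finProdFinEquiv.symm i).2

/-- `k`-fold tensor power of a vector. -/
def tpow {n : ℕ} (x : Fin n → ℝ) (k : ℕ) : Fin (n ^ k) → ℝ :=
  fun i => ∏ j : Fin k, x (finFunctionFinEquiv.symm i j)

/-- `V^n` : probability vectors with components in non-increasing order. -/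
def Vn (n : ℕ) : Set (Fin n → ℝ) :=
  {x | (∀ i, 0 ≤ x i) ∧ (∑ i, x i) = 1 ∧ Antitone x}

/-- `S(y)` : members of `V^n` majorized by `y`. -/
def Sset {n : ℕ} (y : Fin n → ℝ) : Set (Fin n → ℝ) :=
  {x ∈ Vn n | Maj x y}

/-- `T(y,c)` : members of `V^n` with `x ⊗ c ≺ y ⊗ c`. -/
def Tcat {n k : ℕ} (y : Fin n → ℝ) (c : Fin k → ℝ) : Set (Fin n → ℝ) :=
  {x ∈ Vn n | Maj (tensor x c) (tensor y c)}

/-- Local uniformity `l_u(c)` : the minimum of the consecutive ratios `c_{i+1}/c_i`. -/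
def lu {k : ℕ} (c : Fin k → ℝ) : ℝ :=
  sInf {r | ∃ i : ℕ, ∃ h : i + 1 < k, r = c ⟨i + 1, h⟩ / c ⟨i, Nat.lt_of_succ_lt h⟩}

/-- Global uniformity `g_u(c) = c_k / c_1` (smallest over largest component of a
non-increasingly ordered vector). -/
def gu {k : ℕ} (c : Fin k → ℝ) : ℝ :=
  if h : 0 < k then c ⟨k - 1, Nat.sub_lt h Nat.one_pos⟩ / c ⟨0, h⟩ else 1

/-- Largest component. -/
def maxc {n : ℕ} (x : Fin n → ℝ) : ℝ := sSup (Set.range x)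

/-- Smallest component. -/
def minc {n : ℕ} (x : Fin n → ℝ) : ℝ := sInf (Set.range x)

/-- `c'` is a (contiguous) segment of `c`. -/
def IsSegment {j k : ℕ} (c' : Fin j → ℝ) (c : Fin k → ℝ) : Prop :=
  ∃ (i : ℕ) (_h : i + j ≤ k), ∀ t : Fin j, c' t = c ⟨i + t, by have := t.isLt; omega⟩

/-- The first `d` components of a vector. -/
def take {n : ℕ} (x : Fin n → ℝ) (d : ℕ) (h : d ≤ n) : Fin d → ℝ :=
  fun i => x ⟨i, Nat.lt_of_lt_of_le i.isLt h⟩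

/-- The components of a vector after the first `d` ones. -/
def drop {n : ℕ} (x : Fin n → ℝ) (d : ℕ) : Fin (n - d) → ℝ :=
  fun i => x ⟨d + i, by have := i.isLt; omega⟩

/-- The segment `(c_i, …, c_j)` of `c` (`0`-based indices). -/
def seg {k : ℕ} (c : Fin k → ℝ) (i j : ℕ) (hij : i ≤ j) (hj : j < k) :
    Fin (j - i + 1) → ℝ :=
  fun t => c ⟨i + t, by have := t.isLt; omega⟩

/-- `(c_i, …, c_j)` is a block of the decomposition `[c]_α` of the (positive,
non-increasingly ordered) vector `c` according to `α`: ratios within the block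
exceed `α`, and the ratios at the two boundaries of the block are `≤ α`
(or the block touches an end of `c`). -/
def IsBlock {k : ℕ} (α : ℝ) (c : Fin k → ℝ) (i j : ℕ) : Prop :=
  ∃ (hij : i ≤ j) (hj : j < k),
    (i = 0 ∨ c ⟨i, by omega⟩ / c ⟨i - 1, by omega⟩ ≤ α) ∧
    (j = k - 1 ∨ ∃ hj1 : j + 1 < k, c ⟨j + 1, hj1⟩ / c ⟨j, hj⟩ ≤ α) ∧
    (∀ (t : ℕ) (ht1 : i ≤ t) (ht2 : t < j), α < c ⟨t + 1, by omega⟩ / c ⟨t, by omega⟩)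

/-- `T_k(y)` : states transformable to `y` with a `k`-dimensional catalyst. -/
def Tk {n : ℕ} (k : ℕ) (y : Fin n → ℝ) : Set (Fin n → ℝ) :=
  {x ∈ Vn n | ∃ c : Fin k → ℝ, (∀ i, 0 < c i) ∧ (∑ i, c i) = 1 ∧ Antitone c ∧
    Maj (tensor x c) (tensor y c)}

/-- `M_k(y)` : states `x` with `x^{⊗k} ≺ y^{⊗k}`. -/
def Mk {n : ℕ} (k : ℕ) (y : Fin n → ℝ) : Set (Fin n → ℝ) :=
  {x ∈ Vn n | Maj (tpow x k) (tpow y k)}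

/-- `T(y)` : states transformable to `y` with some catalyst. -/
def Tinf {n : ℕ} (y : Fin n → ℝ) : Set (Fin n → ℝ) :=
  {x ∈ Vn n | ∃ (k : ℕ) (c : Fin k → ℝ), 0 < k ∧ (∀ i, 0 < c i) ∧ (∑ i, c i) = 1 ∧
    Antitone c ∧ Maj (tensor x c) (tensor y c)}

/-- `M(y)` : states `x` with `x^{⊗k} ≺ y^{⊗k}` for some `k ≥ 1`. -/
def Minf {n : ℕ} (y : Fin n → ℝ) : Set (Fin n → ℝ) :=
  {x ∈ Vn n | ∃ k : ℕ, 1 ≤ k ∧ Maj (tpow x k) (tpow y k)}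

/-- `S^λ(y)` : states `x` with `x ≺ʷ λ y`. -/
def Slam {n : ℕ} (lam : ℝ) (y : Fin n → ℝ) : Set (Fin n → ℝ) :=
  {x ∈ Vn n | SupMaj x (fun i => lam * y i)}

/-- `T^λ(y,c)` : states `x` with `x ⊗ c ≺ʷ λ (y ⊗ c)`. -/
def Tlamc {n k : ℕ} (lam : ℝ) (y : Fin n → ℝ) (c : Fin k → ℝ) : Set (Fin n → ℝ) :=
  {x ∈ Vn n | SupMaj (tensor x c) (fun i => lam * tensor y c i)}

/-- `T_k^λ(y)`. -/
def Tklam {n : ℕ} (k : ℕ) (lam : ℝ) (y : Fin n → ℝ) : Set (Fin n → ℝ) :=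
  {x ∈ Vn n | ∃ c : Fin k → ℝ, (∀ i, 0 < c i) ∧ (∑ i, c i) = 1 ∧ Antitone c ∧
    SupMaj (tensor x c) (fun i => lam * tensor y c i)}

/-- `M_k^λ(y)`. -/
def Mklam {n : ℕ} (k : ℕ) (lam : ℝ) (y : Fin n → ℝ) : Set (Fin n → ℝ) :=
  {x ∈ Vn n | SupMaj (tpow x k) (fun i => lam ^ k * tpow y k i)}

/-- `T^λ(y)`. -/
def Tlaminf {n : ℕ} (lam : ℝ) (y : Fin n → ℝ) : Set (Fin n → ℝ) :=
  {x ∈ Vn n | ∃ (k : ℕ) (c : Fin k → ℝ), 0 < k ∧ (∀ i, 0 < c i) ∧ (∑ i, c i) = 1 ∧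
    Antitone c ∧ SupMaj (tensor x c) (fun i => lam * tensor y c i)}

/-- `M^λ(y)`. -/
def Mlaminf {n : ℕ} (lam : ℝ) (y : Fin n → ℝ) : Set (Fin n → ℝ) :=
  {x ∈ Vn n | ∃ k : ℕ, 1 ≤ k ∧ SupMaj (tpow x k) (fun i => lam ^ k * tpow y k i)}

/-- `K_d(y)` : concatenations `x = x' ⊕ x''` with `x' ◁ y'` and `x'' ◁ y''`,
where `y'` is the first-`d` part of `y` and `y''` the rest. -/
def Kd {n : ℕ} (y : Fin n → ℝ) (d : ℕ) (h : d ≤ n) : Set (Fin n → ℝ) :=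
  {x ∈ Vn n | SMaj (take x d h) (take y d h) ∧ SMaj (drop x d) (drop y d)}

/-- `y(d)` : first `d` components equal to `e_d(y)/d`, the last `n-d` equal to
`(1 - e_d(y))/(n-d)`. -/
def yvec {n : ℕ} (y : Fin n → ℝ) (d : ℕ) : Fin n → ℝ :=
  fun i => if (i : ℕ) < d then eSum y d / d else (1 - eSum y d) / (n - d)

/-- `K_d^λ(y)` : states `x ∈ S^λ(y)` with `E_l(x) = λ E_l(y)` iff `l = n - d`. -/
def Kdlam {n : ℕ} (lam : ℝ) (y : Fin n → ℝ) (d : ℕ) : Set (Fin n → ℝ) :=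
  {x ∈ Vn n | SupMaj x (fun i => lam * y i) ∧
    ∀ l : ℕ, 1 ≤ l → l ≤ n → (ESum x l = lam * ESum y l ↔ l = n - d)}


/-!
The hinge function `t ↦ ∑ i, (t - x i)⁺` is the Legendre transform of `l ↦ E_l(x)`. It turns `≺ʷ`
into the pointwise order and is additive over concatenation, so that `x ⊗ c` contributes one
rescaled hinge function of `x` for each component of `c`. Write `z = λ y`.

If the ratio condition holds, then for each `d` some of the smallest components of `z ⊗ c` form a
rectangle, the components after `z_d` times a tail of `c` (the tail starts at the index `i` that
minimizes `c_i (z_{d+1} / z_n) ^ i`), and the `k`-fold products of the components after `z_d` are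
the smallest components of `z^{⊗k}`. Comparing sums over these sets and dividing by the tail sum of
`c`, or taking `k`-th roots, gives the inequality between the tail sums of `x` and `z`.

If it fails at `d`, let `x` be constant on the first `d` and on the last `n - d` indices, with the
same tail sum as `z`. Above `z_n`, the hinge functions of `x` and `z` meet only in
`[z_{d+1}, z_d]`. In `x ⊗ c` with a suitable geometric catalyst, or in `x^{⊗k}`, an equality at `t`
would put `t` in many rescaled copies of this interval at once; climbing from each copy to the next
puts `t` above the right end of the lowest copy. Hence the domination is strict, and it survives
when the tail sum of `x` is lowered slightly, which takes `x` out of `S^λ(y)`.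
-/

section Hinge

open Finset

variable {ι κ : Type*} [Fintype ι] [Fintype κ] {x z : ι → ℝ} {c e : κ → ℝ} {t : ℝ}

/-- The hinge function `t ↦ ∑ i, (t - x i)⁺` of a vector. It is the Legendre transform of
`l ↦ E_l(x)`, so super-majorization is the pointwise order of hinge functions; unlike `ESum` it
is defined over any finite index type and is additive over concatenations. -/
def hinge (x : ι → ℝ) (t : ℝ) : ℝ := ∑ i, (t - x i)⁺

theorem hinge_nonneg (x : ι → ℝ) (t : ℝ) : 0 ≤ hinge x t :=
  sum_nonneg fun _ _ => posPart_nonneg _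

theorem card_mul_sub_sum_le_hinge (x : ι → ℝ) (t : ℝ) (s : Finset ι) :
    #s * t - ∑ i ∈ s, x i ≤ hinge x t :=
  calc #s * t - ∑ i ∈ s, x i = ∑ i ∈ s, (t - x i) := by
        rw [sum_sub_distrib, sum_const, nsmul_eq_mul]
    _ ≤ ∑ i ∈ s, (t - x i)⁺ := sum_le_sum fun _ _ => le_posPart _
    _ ≤ hinge x t := sum_le_univ_sum_of_nonneg fun _ => posPart_nonneg _

theorem hinge_eq_card_mul_sub_sum {s : Finset ι} (hs : ∀ i ∈ s, x i ≤ t) (hs' : ∀ i ∉ s, t ≤ x i) :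
    hinge x t = #s * t - ∑ i ∈ s, x i :=
  calc hinge x t = ∑ i ∈ s, (t - x i)⁺ := (sum_subset (subset_univ s) fun i _ hi =>
        posPart_of_nonpos (sub_nonpos.2 (hs' i hi))).symm
    _ = ∑ i ∈ s, (t - x i) := sum_congr rfl fun i hi => posPart_of_nonneg (sub_nonneg.2 (hs i hi))
    _ = #s * t - ∑ i ∈ s, x i := by rw [sum_sub_distrib, sum_const, nsmul_eq_mul]

theorem hinge_eq_zero (h : ∀ i, t ≤ x i) : hinge x t = 0 :=
  sum_eq_zero fun i _ => posPart_of_nonpos (sub_nonpos.2 (h i))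

theorem sum_le_sum_of_hinge_le {s : Finset ι} (h : hinge x ≤ hinge z) (hs : ∀ i ∈ s, z i ≤ t)
    (hs' : ∀ i ∉ s, t ≤ z i) : ∑ i ∈ s, z i ≤ ∑ i ∈ s, x i := by
  linarith [h t, card_mul_sub_sum_le_hinge x t s, hinge_eq_card_mul_sub_sum hs hs']

theorem hinge_comp_equiv (x : ι → ℝ) (f : κ ≃ ι) : hinge (x ∘ f) = hinge x :=
  funext fun t => f.sum_comp fun i => (t - x i)⁺

theorem hinge_smul {w : ℝ} (hw : 0 < w) (x : ι → ℝ) (t : ℝ) :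
    hinge (w • x) t = w * hinge x (t / w) := by
  rw [hinge, hinge, mul_sum]
  refine sum_congr rfl fun i _ => ?_
  rw [posPart_def, posPart_def, mul_max_of_nonneg _ _ hw.le, mul_zero, mul_sub,
    mul_div_cancel₀ _ hw.ne', Pi.smul_apply, smul_eq_mul]

theorem hinge_smul_mono {w : ℝ} (hw : 0 ≤ w) (h : hinge x ≤ hinge z) :
    hinge (w • x) ≤ hinge (w • z) := fun t => by
  obtain rfl | hw := hw.eq_or_lt
  · simp only [zero_smul, le_refl]
  · rw [hinge_smul hw, hinge_smul hw]
    exact mul_le_mul_of_nonneg_left (h _) hw.le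

/-- The tensor product of two vectors over arbitrary index types, indexed by pairs so that both
factors of a component can be read off. -/
def outer (x : ι → ℝ) (c : κ → ℝ) : ι × κ → ℝ := fun p => x p.1 * c p.2

theorem hinge_outer (x : ι → ℝ) (c : κ → ℝ) (t : ℝ) :
    hinge (outer x c) t = ∑ j, hinge (c j • x) t := by
  simp only [hinge, outer, Fintype.sum_prod_type_right, Pi.smul_apply, smul_eq_mul, mul_comm]

theorem hinge_outer_comm (x : ι → ℝ) (c : κ → ℝ) : hinge (outer x c) = hinge (outer c x) := by
  rw [← hinge_comp_equiv (outer c x) (Equiv.prodComm ι κ)]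
  exact congrArg hinge (funext fun p => mul_comm _ _)

theorem hinge_outer_mono_left (hc : 0 ≤ c) (h : hinge x ≤ hinge z) :
    hinge (outer x c) ≤ hinge (outer z c) := fun t => by
  rw [hinge_outer, hinge_outer]
  exact sum_le_sum fun j _ => hinge_smul_mono (hc j) h t

theorem hinge_outer_mono_right (hx : 0 ≤ x) (h : hinge c ≤ hinge e) :
    hinge (outer x c) ≤ hinge (outer x e) := by
  rw [hinge_outer_comm x c, hinge_outer_comm x e]
  exact hinge_outer_mono_left hx h

theorem hinge_outer_lt (hc : 0 ≤ c) (h : hinge x ≤ hinge z) (j : κ)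
    (hj : hinge (c j • x) t < hinge (c j • z) t) : hinge (outer x c) t < hinge (outer z c) t := by
  rw [hinge_outer, hinge_outer]
  exact sum_lt_sum (fun j _ => hinge_smul_mono (hc j) h t) ⟨j, mem_univ j, hj⟩

/-- The `k`-fold tensor power of a vector over an arbitrary index type, indexed by words of
length `k` so that concatenating words splits off powers. -/
def wordProd (x : ι → ℝ) (k : ℕ) : (Fin k → ι) → ℝ := fun f => ∏ l, x (f l)

theorem wordProd_nonneg {ι : Type*} {x : ι → ℝ} (hx : 0 ≤ x) (k : ℕ) : 0 ≤ wordProd x k :=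
  fun f => prod_nonneg fun l _ => hx (f l)

theorem pow_le_wordProd {ι : Type*} {x : ι → ℝ} {r : ℝ} (hr : 0 ≤ r) {k : ℕ} {f : Fin k → ι}
    (h : ∀ l, r ≤ x (f l)) : r ^ k ≤ wordProd x k f :=
  calc r ^ k = ∏ _ : Fin k, r := (Fin.prod_const k r).symm
    _ ≤ wordProd x k f := prod_le_prod (fun _ _ => hr) fun l _ => h l

theorem wordProd_le_pow {ι : Type*} {x : ι → ℝ} (hx : 0 ≤ x) {r : ℝ} {k : ℕ} {f : Fin k → ι}
    (h : ∀ l, x (f l) ≤ r) : wordProd x k f ≤ r ^ k :=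
  calc wordProd x k f ≤ ∏ _ : Fin k, r := prod_le_prod (fun l _ => hx (f l)) fun l _ => h l
    _ = r ^ k := Fin.prod_const k r

theorem hinge_wordProd_succ (x : ι → ℝ) (k : ℕ) :
    hinge (wordProd x (k + 1)) = hinge (outer x (wordProd x k)) := by
  rw [← hinge_comp_equiv _ (Fin.consEquiv fun _ => ι)]
  refine congrArg hinge (funext fun p => ?_)
  simp [wordProd, outer, Fin.prod_univ_succ]

theorem hinge_wordProd_add_succ (x : ι → ℝ) (i j : ℕ) :
    hinge (wordProd x (i + j + 1)) = hinge (outer x (outer (wordProd x i) (wordProd x j))) := by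
  rw [← hinge_comp_equiv _
    (((Equiv.refl ι).prodCongr (Fin.appendEquiv i j)).trans (Fin.consEquiv fun _ => ι))]
  refine congrArg hinge (funext fun p => ?_)
  simp [wordProd, outer, Fin.prod_univ_succ, Fin.prod_univ_add, Fin.appendEquiv]

theorem hinge_wordProd_mono (hx : 0 ≤ x) (hz : 0 ≤ z) (h : hinge x ≤ hinge z) (k : ℕ) :
    hinge (wordProd x k) ≤ hinge (wordProd z k) := by
  induction k with
  | zero => exact le_of_eq (congrArg hinge (funext fun f => by simp [wordProd]))
  | succ k ih =>
    rw [hinge_wordProd_succ, hinge_wordProd_succ]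
    exact (hinge_outer_mono_right hx ih).trans (hinge_outer_mono_left (wordProd_nonneg hz k) h)

-- Replace the letters of `x` by those of `z` one block at a time; the strict step is the
-- replacement of the single letter in front of the mixed word `(f, g)`.
theorem hinge_wordProd_lt (hx : 0 ≤ x) (hz : 0 ≤ z) (h : hinge x ≤ hinge z) {i j : ℕ}
    (f : Fin i → ι) (g : Fin j → ι)
    (hfg : hinge ((wordProd x i f * wordProd z j g) • x) t <
      hinge ((wordProd x i f * wordProd z j g) • z) t) :
    hinge (wordProd x (i + j + 1)) t < hinge (wordProd z (i + j + 1)) t := by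
  have hxi := wordProd_nonneg hx i
  have hzj := wordProd_nonneg hz j
  have hmixed : 0 ≤ outer (wordProd x i) (wordProd z j) := fun p => mul_nonneg (hxi p.1) (hzj p.2)
  calc hinge (wordProd x (i + j + 1)) t
      = hinge (outer x (outer (wordProd x i) (wordProd x j))) t := by
        rw [hinge_wordProd_add_succ]
    _ ≤ hinge (outer x (outer (wordProd x i) (wordProd z j))) t :=
        hinge_outer_mono_right hx
          (hinge_outer_mono_right hxi (hinge_wordProd_mono hx hz h j)) t
    _ < hinge (outer z (outer (wordProd x i) (wordProd z j))) t :=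
        hinge_outer_lt hmixed h (f, g) hfg
    _ ≤ hinge (outer z (outer (wordProd z i) (wordProd z j))) t :=
        hinge_outer_mono_right hz
          (hinge_outer_mono_left hzj (hinge_wordProd_mono hx hz h i)) t
    _ = hinge (wordProd z (i + j + 1)) t := by rw [hinge_wordProd_add_succ]

end Hinge

section SuperMajorization

open Finset

variable {n k l : ℕ} {x z : Fin n → ℝ} {t : ℝ}

theorem ESum_eq_inf' (x : Fin n → ℝ) (hl : l ≤ n) :
    ESum x l = (powersetCard l univ).inf' (powersetCard_nonempty.2 (by simpa using hl))
      fun s => ∑ i ∈ s, x i := by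
  rw [inf'_eq_csInf_image]
  refine congrArg sInf (Set.ext fun r => ?_)
  simp [eq_comm]

theorem continuous_ESum (hl : l ≤ n) : Continuous fun x : Fin n → ℝ => ESum x l := by
  simp only [ESum_eq_inf' _ hl]
  exact Continuous.finset_inf'_apply _ fun s _ => by fun_prop

theorem isOpen_setOf_sSupMaj (z : Fin n → ℝ) : IsOpen {x | SSupMaj x z} := by
  have h : {x | SSupMaj x z} = ⋂ l ∈ Icc 1 n, {x | ESum z l < ESum x l} := by
    ext x
    simp [SSupMaj]
  rw [h]
  exact isOpen_biInter_finset fun l hl =>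
    isOpen_lt continuous_const (continuous_ESum (mem_Icc.1 hl).2)

theorem continuous_tensor (c : Fin k → ℝ) : Continuous fun x : Fin n → ℝ => tensor x c :=
  continuous_pi fun _ => (continuous_apply _).mul_const _

theorem continuous_tpow (k : ℕ) : Continuous fun x : Fin n → ℝ => tpow x k :=
  continuous_pi fun _ => continuous_finsetProd _ fun _ _ => continuous_apply _

theorem SSupMaj.supMaj (h : SSupMaj x z) : SupMaj x z := fun l hl hn => (h l hl hn).le

theorem ESum_card_le (x : Fin n → ℝ) (s : Finset (Fin n)) : ESum x #s ≤ ∑ i ∈ s, x i := by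
  rw [ESum_eq_inf' x (card_finset_fin_le s)]
  exact inf'_le _ (mem_powersetCard_univ.2 rfl)

theorem mul_sub_hinge_le_ESum (x : Fin n → ℝ) (hl : l ≤ n) (t : ℝ) :
    l * t - hinge x t ≤ ESum x l := by
  rw [ESum_eq_inf' x hl]
  refine le_inf' _ _ fun s hs => ?_
  have := card_mul_sub_sum_le_hinge x t s
  rw [mem_powersetCard_univ.1 hs] at this
  linarith

theorem ESum_card_eq_sum {s : Finset (Fin n)} (hs : ∀ i ∈ s, x i ≤ t) (hs' : ∀ i ∉ s, t ≤ x i) :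
    ESum x #s = ∑ i ∈ s, x i :=
  (ESum_card_le x s).antisymm <| by
    linarith [mul_sub_hinge_le_ESum x (card_finset_fin_le s) t, hinge_eq_card_mul_sub_sum hs hs']

theorem exists_hinge_eq_mul_sub_ESum (x : Fin n → ℝ) (t : ℝ) :
    ∃ l ≤ n, hinge x t = l * t - ESum x l := by
  have hs : ∀ i ∈ ({i | x i ≤ t} : Finset (Fin n)), x i ≤ t := fun i hi => (mem_filter.1 hi).2
  have hs' : ∀ i ∉ ({i | x i ≤ t} : Finset (Fin n)), t ≤ x i := fun i hi => by
    simp only [mem_filter_univ, not_le] at hi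
    exact hi.le
  exact ⟨_, card_finset_fin_le _, by
    rw [ESum_card_eq_sum hs hs', hinge_eq_card_mul_sub_sum hs hs']⟩

-- Exchange argument: in a set of `l` components with minimal sum no component exceeds one outside.
theorem exists_ESum_eq_mul_sub_hinge (x : Fin n → ℝ) (hl : 1 ≤ l) (hn : l ≤ n) :
    ∃ t, ESum x l = l * t - hinge x t := by
  obtain ⟨s, hs, hmin⟩ := exists_mem_eq_inf'
    (powersetCard_nonempty.2 (by simpa using hn : l ≤ #(univ : Finset (Fin n))))
    fun s => ∑ i ∈ s, x i
  rw [← ESum_eq_inf' x hn] at hmin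
  obtain rfl := mem_powersetCard_univ.1 hs
  obtain ⟨j, hj, hmax⟩ := exists_max_image s x (card_pos.1 hl)
  refine ⟨x j, ?_⟩
  rw [hinge_eq_card_mul_sub_sum hmax fun i hi => ?_, hmin, sub_sub_cancel]
  have hi' : i ∉ s.erase j := fun h => hi (mem_of_mem_erase h)
  have hexchange := ESum_card_le x (insert i (s.erase j))
  rw [card_insert_of_notMem hi', card_erase_add_one hj, sum_insert hi', hmin] at hexchange
  linarith [add_sum_erase s x hj]

theorem supMaj_iff_hinge_le : SupMaj x z ↔ hinge x ≤ hinge z := by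
  constructor
  · intro h t
    obtain ⟨l, hn, hl⟩ := exists_hinge_eq_mul_sub_ESum x t
    have hE : ESum z l ≤ ESum x l := by
      obtain rfl | hpos := l.eq_zero_or_pos
      · simp [ESum]
      · exact h l hpos hn
    linarith [mul_sub_hinge_le_ESum z hn t]
  · intro h l hl hn
    obtain ⟨t, ht⟩ := exists_ESum_eq_mul_sub_hinge z hl hn
    linarith [mul_sub_hinge_le_ESum x hn t, h t]

theorem sSupMaj_of_hinge_lt {m : ℝ} (hm : ∀ i, m < x i)
    (h : ∀ t, m < t → hinge x t < hinge z t) : SSupMaj x z := by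
  intro l hl hn
  obtain ⟨t, ht⟩ := exists_ESum_eq_mul_sub_hinge z hl hn
  obtain hmt | htm := lt_or_ge m t
  · linarith [mul_sub_hinge_le_ESum x hn t, h t hmt]
  · have : NeZero n := ⟨by omega⟩
    obtain ⟨i, hi⟩ := Finite.exists_min x
    have hlt : l * t < l * x i := by
      have := htm.trans_lt (hm i)
      gcongr
    linarith [mul_sub_hinge_le_ESum x hn (x i), hinge_eq_zero hi, hinge_nonneg z t]

theorem ESum_eq_sum_Ici (hx : Antitone x) (d : Fin n) : ESum x (n - d) = ∑ i ∈ Ici d, x i := by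
  rw [← Fin.card_Ici]
  exact ESum_card_eq_sum (fun i hi => hx (mem_Ici.1 hi))
    fun i hi => hx (not_le.1 (mt mem_Ici.2 hi)).le

theorem supMaj_iff_sum_Ici_le (hx : Antitone x) (hz : Antitone z) :
    SupMaj x z ↔ ∀ d, ∑ i ∈ Ici d, z i ≤ ∑ i ∈ Ici d, x i := by
  simp only [← ESum_eq_sum_Ici hx, ← ESum_eq_sum_Ici hz]
  refine ⟨fun h d => h _ (by omega) (by omega), fun h l hl hn => ?_⟩
  simpa only [Nat.sub_sub_self hn] using h ⟨n - l, by omega⟩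

theorem supMaj_smul_iff {w : ℝ} (hw : 0 < w) : SupMaj (w • x) (w • z) ↔ SupMaj x z := by
  simp only [supMaj_iff_hinge_le]
  refine ⟨fun h => ?_, hinge_smul_mono hw.le⟩
  simpa only [inv_smul_smul₀ hw.ne'] using hinge_smul_mono (inv_nonneg.2 hw.le) h

theorem hinge_tensor (x : Fin n → ℝ) (c : Fin k → ℝ) : hinge (tensor x c) = hinge (outer x c) :=
  hinge_comp_equiv (outer x c) finProdFinEquiv.symm

theorem hinge_tpow (x : Fin n → ℝ) (k : ℕ) : hinge (tpow x k) = hinge (wordProd x k) :=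
  hinge_comp_equiv (wordProd x k) finFunctionFinEquiv.symm

theorem SupMaj.tensor {c : Fin k → ℝ} (h : SupMaj x z) (hc : 0 ≤ c) :
    SupMaj (tensor x c) (tensor z c) := by
  rw [supMaj_iff_hinge_le, hinge_tensor, hinge_tensor]
  exact hinge_outer_mono_left hc (supMaj_iff_hinge_le.1 h)

theorem SupMaj.tpow (h : SupMaj x z) (hx : 0 ≤ x) (hz : 0 ≤ z) (k : ℕ) :
    SupMaj (tpow x k) (tpow z k) := by
  rw [supMaj_iff_hinge_le, hinge_tpow, hinge_tpow]
  exact hinge_wordProd_mono hx hz (supMaj_iff_hinge_le.1 h) k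

theorem smul_tensor (r : ℝ) (x : Fin n → ℝ) (c : Fin k → ℝ) :
    tensor (r • x) c = r • tensor x c :=
  funext fun _ => mul_assoc _ _ _

theorem tensor_smul (r : ℝ) (x : Fin n → ℝ) (c : Fin k → ℝ) :
    tensor x (r • c) = r • tensor x c :=
  funext fun _ => mul_left_comm _ _ _

theorem smul_tpow (r : ℝ) (x : Fin n → ℝ) (k : ℕ) : tpow (r • x) k = r ^ k • tpow x k := by
  funext i
  simp [tpow, prod_mul_distrib]

end SuperMajorization

section RatioBound

open Finset

variable {n k : ℕ} {x z : Fin (n + 1) → ℝ}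

/-- The condition `z_{d+1} ^ (k + 1) ≤ z_{n+1} ^ k * z_d` for `1 ≤ d ≤ n` on a vector with `n + 1`
components: the third statement of the theorem with `k + 1` and `n + 1` in place of `k` and `n`. It
includes `d = n`, where it holds for every nonnegative antitone vector. -/
def RatioBound (k : ℕ) (z : Fin (n + 1) → ℝ) : Prop :=
  ∀ d : Fin n, z d.succ ^ (k + 1) ≤ z (Fin.last n) ^ k * z d.castSucc

theorem ratioBound_smul_iff {w : ℝ} (hw : 0 < w) : RatioBound k (w • z) ↔ RatioBound k z := by
  refine forall_congr' fun d => ?_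
  have hscale : (w • z) (Fin.last n) ^ k * (w • z) d.castSucc =
      w ^ (k + 1) * (z (Fin.last n) ^ k * z d.castSucc) := by
    simp only [Pi.smul_apply, smul_eq_mul]
    ring
  rw [hscale, Pi.smul_apply, smul_eq_mul, mul_pow, mul_le_mul_iff_right₀ (pow_pos hw _)]

theorem ratioBound_iff_forall_nat (hz : Antitone z) (hlast : 0 ≤ z (Fin.last n)) :
    RatioBound k z ↔ ∀ (d : ℕ) (_ : 0 < d) (_ : d + 1 < n + 1),
      z ⟨d, by omega⟩ ^ (k + 1) ≤ z (Fin.last n) ^ k * z ⟨d - 1, by omega⟩ := by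
  refine ⟨fun h d hd hdn => ?_, fun h d => ?_⟩
  · obtain ⟨d, rfl⟩ := Nat.exists_eq_add_one.2 hd
    exact h ⟨d, by omega⟩
  · obtain hdn | hdn := (Nat.succ_le_of_lt d.isLt).lt_or_eq
    · exact h (d + 1) d.val.succ_pos (by omega)
    · have hd : d.succ = Fin.last n := Fin.ext hdn
      rw [hd, pow_succ]
      exact mul_le_mul_of_nonneg_left (hz (Fin.le_last _)) (pow_nonneg hlast k)

theorem supMaj_of_sum_Ici_succ_le (hx : Antitone x) (hz : Antitone z) (hsum : ∑ i, z i ≤ ∑ i, x i)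
    (h : ∀ d : Fin n, ∑ i ∈ Ici d.succ, z i ≤ ∑ i ∈ Ici d.succ, x i) : SupMaj x z := by
  refine (supMaj_iff_sum_Ici_le hx hz).2 (Fin.cases ?_ h)
  rwa [← bot_eq_zero, Ici_bot]

theorem RatioBound.supMaj_of_tpow (h : RatioBound k z) (hz : Antitone z) (hz0 : 0 ≤ z)
    (hx : Antitone x) (hx0 : 0 ≤ x) (hsum : ∑ i, z i ≤ ∑ i, x i)
    (hxz : SupMaj (tpow x (k + 1)) (tpow z (k + 1))) : SupMaj x z := by
  rw [supMaj_iff_hinge_le, hinge_tpow, hinge_tpow] at hxz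
  refine supMaj_of_sum_Ici_succ_le hx hz hsum fun d => ?_
  have htail : ∑ f ∈ Fintype.piFinset fun _ => Ici d.succ, wordProd z (k + 1) f ≤
      ∑ f ∈ Fintype.piFinset fun _ => Ici d.succ, wordProd x (k + 1) f := by
    refine sum_le_sum_of_hinge_le (t := z d.succ ^ (k + 1)) hxz (fun f hf => ?_) fun f hf => ?_
    · exact wordProd_le_pow hz0 fun l => hz (mem_Ici.1 (Fintype.mem_piFinset.1 hf l))
    · simp only [Fintype.mem_piFinset, mem_Ici, not_forall, not_le] at hf
      obtain ⟨l, hl⟩ := hf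
      calc z d.succ ^ (k + 1) ≤ z d.castSucc * z (Fin.last n) ^ k := by rw [mul_comm]; exact h d
        _ ≤ z (f l) * wordProd z k fun i => f (l.succAbove i) :=
          mul_le_mul (hz (Fin.le_castSucc_iff.2 hl))
            (pow_le_wordProd (hz0 _) fun i => hz (Fin.le_last _)) (pow_nonneg (hz0 _) _) (hz0 _)
        _ = wordProd z (k + 1) f := (Fin.prod_univ_succAbove (fun i => z (f i)) l).symm
  simp only [wordProd, ← sum_pow'] at htail
  exact le_of_pow_le_pow_left₀ k.succ_ne_zero (sum_nonneg fun i _ => hx0 i) htail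

-- The cut is placed where `c i * (u / v) ^ i` is smallest.
theorem exists_catalyst_cut {c : Fin (k + 1) → ℝ} (hc : ∀ i, 0 < c i) {v u p : ℝ} (hv : 0 < v)
    (hvu : v ≤ u) (h : u ^ (k + 1) ≤ v ^ k * p) :
    ∃ i, u * c i ≤ p * c (Fin.last k) ∧ ∀ j : Fin k, i = j.succ → u * c i ≤ v * c j.castSucc := by
  have hr : 1 ≤ u / v := (one_le_div hv).2 hvu
  have hu : 0 < u := hv.trans_le hvu
  obtain ⟨i, hi⟩ := Finite.exists_min fun i : Fin (k + 1) => c i * (u / v) ^ (i : ℕ)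
  refine ⟨i, ?_, ?_⟩
  · have hp : u * (u / v) ^ k ≤ p := by
      rw [div_pow, mul_div_assoc', div_le_iff₀ (pow_pos hv k)]
      linarith [pow_succ' u k]
    calc u * c i ≤ u * (c i * (u / v) ^ (i : ℕ)) :=
          mul_le_mul_of_nonneg_left (le_mul_of_one_le_right (hc i).le (one_le_pow₀ hr)) hu.le
      _ ≤ u * (c (Fin.last k) * (u / v) ^ k) := mul_le_mul_of_nonneg_left (hi (Fin.last k)) hu.le
      _ = u * (u / v) ^ k * c (Fin.last k) := by ring
      _ ≤ p * c (Fin.last k) := mul_le_mul_of_nonneg_right hp (hc _).le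
  · rintro j rfl
    have hj : c j.succ * (u / v) ≤ c j.castSucc := by
      refine le_of_mul_le_mul_right ?_ (pow_pos (one_pos.trans_le hr) (j : ℕ))
      simpa only [Fin.val_succ, Fin.val_castSucc, pow_succ', ← mul_assoc] using hi j.castSucc
    rw [mul_div_assoc', div_le_iff₀ hv] at hj
    linarith

theorem RatioBound.supMaj_of_tensor (h : RatioBound k z) (hz : Antitone z) (hz0 : ∀ i, 0 < z i)
    (hx : Antitone x) (hsum : ∑ i, z i ≤ ∑ i, x i) {c : Fin (k + 1) → ℝ} (hc0 : ∀ i, 0 < c i)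
    (hc : Antitone c) (hxz : SupMaj (tensor x c) (tensor z c)) : SupMaj x z := by
  rw [supMaj_iff_hinge_le, hinge_tensor, hinge_tensor] at hxz
  refine supMaj_of_sum_Ici_succ_le hx hz hsum fun d => ?_
  obtain ⟨i, hip, hiv⟩ := exists_catalyst_cut hc0 (hz0 (Fin.last n)) (hz (Fin.le_last d.succ)) (h d)
  have htail : ∑ q ∈ Ici d.succ ×ˢ Ici i, outer z c q ≤ ∑ q ∈ Ici d.succ ×ˢ Ici i, outer x c q := by
    refine sum_le_sum_of_hinge_le (t := z d.succ * c i) hxz ?_ ?_ <;> rintro ⟨a, b⟩ hab <;>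
      simp only [mem_product, mem_Ici, not_and_or, not_le] at hab
    · exact mul_le_mul (hz hab.1) (hc hab.2) (hc0 b).le (hz0 _).le
    · obtain had | hbi := hab
      · exact hip.trans <| mul_le_mul (hz (Fin.le_castSucc_iff.2 had)) (hc (Fin.le_last b))
          (hc0 _).le (hz0 a).le
      · obtain ⟨j, rfl⟩ := Fin.exists_succ_eq.2 (Fin.ne_zero_of_lt hbi)
        exact (hiv j rfl).trans <| mul_le_mul (hz (Fin.le_last a)) (hc (Fin.le_castSucc_iff.2 hbi))
          (hc0 _).le (hz0 a).le
  simp only [outer, sum_product, ← sum_mul_sum] at htail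
  exact le_of_mul_le_mul_right htail (sum_pos (fun j _ => hc0 j) nonempty_Ici)

end RatioBound

section GapMaj

open Finset

variable {ι : Type*} [Fintype ι] {x z : ι → ℝ} {v u p t : ℝ}

/-- Hinge form of membership of `x` in the paper's `K_d^λ(y)`, for `z = λ y` with smallest component
`v`, `u = z_{d+1}` and `p = z_d`: above `v`, the hinge functions of `x` and `z` can meet only within
the gap between two consecutive components of `z`. -/
structure GapMaj (x z : ι → ℝ) (v u p : ℝ) : Prop where
  hinge_le : hinge x ≤ hinge z
  lt : ∀ i, v < x i
  mem_Icc : ∀ ⦃t⦄, v < t → hinge z t ≤ hinge x t → t ∈ Set.Icc u p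

theorem GapMaj.mem_Icc_smul (h : GapMaj x z v u p) {w : ℝ} (hw : 0 < w) (ht : w * v < t)
    (htie : hinge (w • z) t ≤ hinge (w • x) t) : t ∈ Set.Icc (w * u) (w * p) := by
  rw [hinge_smul hw, hinge_smul hw, mul_le_mul_iff_right₀ hw] at htie
  obtain ⟨hu, hp⟩ := h.mem_Icc ((lt_div_iff₀' hw).2 ht) htie
  exact ⟨(le_div_iff₀' hw).1 hu, (div_le_iff₀' hw).1 hp⟩

-- Each gap begins above the point `w * v` from which the next one confines `t`.
theorem GapMaj.pow_mul_le (h : GapMaj x z v u p) {a b : ℝ} (ha : 0 < a) (hb : 0 < b)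
    (hba : b * v < a * u) {k : ℕ} (ht : a ^ k * v < t)
    (htie : ∀ i j, i + j = k → hinge ((a ^ i * b ^ j) • z) t ≤ hinge ((a ^ i * b ^ j) • x) t) :
    b ^ k * u ≤ t := by
  have hchain : ∀ j i, i + j = k → a ^ i * b ^ j * u ≤ t := by
    intro j
    induction j with
    | zero =>
      rintro i rfl
      exact (h.mem_Icc_smul (by positivity) (by simpa using ht) (htie i 0 rfl)).1
    | succ j ih =>
      intro i hij
      refine (h.mem_Icc_smul (by positivity) ?_ (htie i (j + 1) hij)).1
      calc a ^ i * b ^ (j + 1) * v = a ^ i * b ^ j * (b * v) := by ring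
        _ < a ^ i * b ^ j * (a * u) := by gcongr
        _ = a ^ (i + 1) * b ^ j * u := by ring
        _ ≤ t := ih (i + 1) (by omega)
  simpa using hchain k 0 (zero_add k)

theorem GapMaj.sSupMaj_tensor {n k : ℕ} {x z : Fin n → ℝ} (h : GapMaj x z v u p) (hv : 0 ≤ v)
    {α : ℝ} (hα : 0 < α) (hα1 : α ≤ 1) (hvu : v < α * u) (hpu : α ^ k * p < u) :
    SSupMaj (tensor x fun j : Fin (k + 1) => α ^ (j : ℕ))
      (tensor z fun j : Fin (k + 1) => α ^ (j : ℕ)) := by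
  refine sSupMaj_of_hinge_lt (m := α ^ k * v) (fun i => ?_) fun t ht => ?_
  · have hx := h.lt (finProdFinEquiv.symm i).1
    calc α ^ k * v < α ^ k * x (finProdFinEquiv.symm i).1 := by gcongr
      _ ≤ x (finProdFinEquiv.symm i).1 * α ^ ((finProdFinEquiv.symm i).2 : ℕ) := by
        rw [mul_comm]
        exact mul_le_mul_of_nonneg_left
          (pow_le_pow_of_le_one hα.le hα1 (Fin.is_le _)) (hv.trans hx.le)
  · rw [hinge_tensor, hinge_tensor]
    by_contra! hle
    have htie : ∀ i ≤ k, hinge (α ^ i • z) t ≤ hinge (α ^ i • x) t := fun i hi => by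
      by_contra! hlt
      exact hle.not_gt <| hinge_outer_lt (fun j => pow_nonneg hα.le _) h.hinge_le
        ⟨i, Nat.lt_succ_of_le hi⟩ hlt
    have hut : 1 ^ k * u ≤ t := h.pow_mul_le hα one_pos (by rwa [one_mul]) ht fun i j hij => by
      rw [one_pow, mul_one]
      exact htie i (by omega)
    have htp := (h.mem_Icc_smul (pow_pos hα k) ht (htie k le_rfl)).2
    rw [one_pow, one_mul] at hut
    exact (hut.trans htp).not_gt hpu

theorem GapMaj.sSupMaj_tpow {n k : ℕ} {x z : Fin n → ℝ} {b m d : Fin n}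
    (h : GapMaj x z (z m) (z d) p) (hz : ∀ i, 0 < z i) (hb : x b < z d)
    (hp : z m ^ k * p < z d ^ (k + 1)) :
    SSupMaj (tpow x (k + 1)) (tpow z (k + 1)) := by
  have hx : ∀ i, 0 < x i := fun i => (hz m).trans (h.lt i)
  refine sSupMaj_of_hinge_lt (m := z m ^ (k + 1)) (fun i => ?_) fun t ht => ?_
  · calc z m ^ (k + 1) = ∏ _ : Fin (k + 1), z m := by simp
      _ < tpow x (k + 1) i :=
        prod_lt_prod_of_nonempty (fun _ _ => hz m) (fun j _ => h.lt _) univ_nonempty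
  · rw [hinge_tpow, hinge_tpow]
    by_contra! hle
    have htie : ∀ i j, i + j = k → ∀ q,
        hinge ((x b ^ i * z q ^ j) • z) t ≤ hinge ((x b ^ i * z q ^ j) • x) t := by
      rintro i j rfl q
      by_contra! hlt
      refine hle.not_gt (hinge_wordProd_lt (fun i => (hx i).le) (fun i => (hz i).le) h.hinge_le
        (fun _ => b) (fun _ => q) ?_)
      simpa [wordProd] using hlt
    have hxt : x b ^ k * z d ≤ t := by
      refine h.pow_mul_le (hz m) (hx b) ?_ ht fun i j hij => ?_
      · rw [mul_comm]
        exact mul_lt_mul_of_pos_left hb (hz m)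
      · rw [mul_comm]
        exact htie j i (by omega) m
    have hzt : z d ^ k * z d ≤ t := by
      refine h.pow_mul_le (hx b) (hz d) ?_ (hxt.trans_lt' ?_) fun i j hij => htie i j hij d
      · rw [mul_comm]
        exact mul_lt_mul_of_pos_right (h.lt b) (hz d)
      · exact mul_lt_mul_of_pos_left ((h.lt b).trans hb) (pow_pos (hx b) k)
    have htp := (h.mem_Icc_smul (pow_pos (hz m) k) ht
      (by simpa using htie 0 k (zero_add k) m)).2
    linarith [pow_succ (z d) k]

theorem exists_pow_mul_lt {k : ℕ} (hv : 0 < v) (hu : 0 < u) (hup : u ≤ p)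
    (h : v ^ k * p < u ^ (k + 1)) : ∃ α, 0 < α ∧ α ≤ 1 ∧ v < α * u ∧ α ^ k * p < u := by
  have hp : 0 < p := hu.trans_le hup
  have hlt : (v / u) ^ k < u / p := by
    rw [div_pow, div_lt_div_iff₀ (pow_pos hu k) hp]
    linarith [pow_succ' u k]
  obtain ⟨α, hvα, hα⟩ :=
    ((continuous_pow k).continuousAt.eventually (gt_mem_nhds hlt)).exists_gt
  refine ⟨α, (div_pos hv hu).trans hvα, ?_, (div_lt_iff₀ hu).1 hvα, (lt_div_iff₀ hp).1 hα⟩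
  by_contra! h1
  exact ((one_le_pow₀ h1.le).trans_lt hα).not_ge ((div_le_one hp).2 hup)

end GapMaj

section TwoLevel

open Finset

variable {ι : Type*} [Fintype ι] [DecidableEq ι] {T : Finset ι} {s : ℝ}

/-- The vector of total sum `1` that is constant on `T`, with mass `s` there, and constant off `T`.
For `T` a tail of the index set and `s` the mass that `z` puts on it, this plays the role of the
paper's `y(d)`. -/
def twoLevel (T : Finset ι) (s : ℝ) : ι → ℝ := fun i => if i ∈ T then s / #T else (1 - s) / #Tᶜ

theorem twoLevel_of_mem {i : ι} (hi : i ∈ T) : twoLevel T s i = s / #T := if_pos hi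

theorem twoLevel_of_notMem {i : ι} (hi : i ∉ T) : twoLevel T s i = (1 - s) / #Tᶜ := if_neg hi

theorem continuous_twoLevel (T : Finset ι) : Continuous (twoLevel T) :=
  continuous_pi fun i => by
    unfold twoLevel
    split_ifs <;> fun_prop

theorem sum_twoLevel (hT : T.Nonempty) : ∑ i ∈ T, twoLevel T s i = s := by
  rw [sum_congr rfl fun i hi => twoLevel_of_mem hi, sum_const, nsmul_eq_mul,
    mul_div_cancel₀ _ (Nat.cast_ne_zero.2 hT.card_pos.ne')]

theorem sum_univ_twoLevel (hT : T.Nonempty) (hT' : Tᶜ.Nonempty) : ∑ i, twoLevel T s i = 1 := by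
  rw [← sum_add_sum_compl T, sum_twoLevel hT,
    sum_congr rfl fun i hi => twoLevel_of_notMem (mem_compl.1 hi), sum_const, nsmul_eq_mul,
    mul_div_cancel₀ _ (Nat.cast_ne_zero.2 hT'.card_pos.ne'), add_sub_cancel]

theorem hinge_twoLevel (hs : s / #T ≤ (1 - s) / #Tᶜ) (t : ℝ) :
    ∃ U, (U = ∅ ∨ U = T ∨ U = univ) ∧
      hinge (twoLevel T s) t = #U * t - ∑ i ∈ U, twoLevel T s i := by
  have hval : ∀ i, i ∈ T ∧ twoLevel T s i = s / #T ∨ i ∉ T ∧ twoLevel T s i = (1 - s) / #Tᶜ :=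
    fun i => (em (i ∈ T)).imp (fun h => ⟨h, twoLevel_of_mem h⟩) fun h => ⟨h, twoLevel_of_notMem h⟩
  obtain ht | ht := le_or_gt t (s / #T)
  · refine ⟨∅, by simp, hinge_eq_card_mul_sub_sum (by simp) fun i _ => ?_⟩
    grind
  obtain ht' | ht' := le_or_gt t ((1 - s) / #Tᶜ)
  · refine ⟨T, by simp, hinge_eq_card_mul_sub_sum (fun i _ => ?_) fun i _ => ?_⟩ <;> grind
  · refine ⟨univ, by simp, hinge_eq_card_mul_sub_sum (fun i _ => ?_) (by simp)⟩
    grind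

theorem gapMaj_twoLevel {z : ι → ℝ} {m d e : ι} (hd : d ∈ T) (he : e ∉ T)
    (hsum : ∑ i, z i < 1) (hlow : z m < (∑ i ∈ T, z i) / #T)
    (hlevels : (∑ i ∈ T, z i) / #T ≤ (1 - ∑ i ∈ T, z i) / #Tᶜ) :
    GapMaj (twoLevel T (∑ i ∈ T, z i)) z (z m) (z d) (z e) := by
  set x := twoLevel T (∑ i ∈ T, z i)
  have hxT : ∑ i ∈ T, x i = ∑ i ∈ T, z i := sum_twoLevel ⟨d, hd⟩
  have hx1 : ∑ i, x i = 1 := sum_univ_twoLevel ⟨d, hd⟩ ⟨e, mem_compl.2 he⟩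
  refine ⟨fun t => ?_, fun i => ?_, fun t ht htie => ?_⟩
  · obtain ⟨U, hU, hxt⟩ := hinge_twoLevel hlevels t
    have hzx : ∑ i ∈ U, z i ≤ ∑ i ∈ U, x i := by
      obtain rfl | rfl | rfl := hU
      exacts [by simp, hxT.ge, hsum.le.trans hx1.ge]
    linarith [card_mul_sub_sum_le_hinge z t U]
  · by_cases hi : i ∈ T
    · exact hlow.trans_eq (twoLevel_of_mem hi).symm
    · exact (hlow.trans_le hlevels).trans_eq (twoLevel_of_notMem hi).symm
  · obtain ⟨U, hU, hxt⟩ := hinge_twoLevel hlevels t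
    rw [hxt] at htie
    have hz := card_mul_sub_sum_le_hinge z t
    obtain rfl | hU | rfl := hU
    · have hsingle := hz {m}
      simp only [card_singleton, card_empty, sum_singleton, sum_empty] at hsingle htie
      push_cast at hsingle htie
      linarith
    · rw [hU, hxT] at htie
      have herase := hz (T.erase d)
      have hinsert := hz (insert e T)
      rw [sum_erase_eq_sub hd, cast_card_erase_of_mem hd] at herase
      rw [sum_insert he, card_insert_of_notMem he, Nat.cast_succ] at hinsert
      constructor <;> linarith
    · linarith [hz univ]

end TwoLevel

section Necessity

open Finset

variable {n k : ℕ} {z : Fin (n + 1) → ℝ}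

theorem twoLevel_Ici_mem_Vn (d : Fin n) {s : ℝ} (hs : 0 ≤ s)
    (hlevels : s / #(Ici d.succ) ≤ (1 - s) / #(Ici d.succ)ᶜ) :
    twoLevel (Ici d.succ) s ∈ Vn (n + 1) := by
  have hlow : 0 ≤ s / #(Ici d.succ) := by positivity
  refine ⟨fun _ => ?_, sum_univ_twoLevel nonempty_Ici ⟨d.castSucc, by simp⟩, fun i j hij => ?_⟩
  · unfold twoLevel
    split_ifs
    exacts [hlow, hlow.trans hlevels]
  · unfold twoLevel
    split_ifs with hj hi
    · rfl
    · exact hlevels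
    · exact absurd (mem_Ici.2 ((mem_Ici.1 ‹_›).trans hij)) hj
    · rfl

theorem tail_mean_bounds {d : Fin n} (hz : Antitone z) (hd : z (Fin.last n) < z d.succ)
    (hsum : ∑ i, z i < 1) :
    z (Fin.last n) < (∑ i ∈ Ici d.succ, z i) / #(Ici d.succ) ∧
    (∑ i ∈ Ici d.succ, z i) / #(Ici d.succ) < z d.succ ∧
    z d.succ ≤ (1 - ∑ i ∈ Ici d.succ, z i) / #(Ici d.succ)ᶜ := by
  have hcard : (0 : ℝ) < #(Ici d.succ) := Nat.cast_pos.2 nonempty_Ici.card_pos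
  have hcard' : (0 : ℝ) < #(Ici d.succ)ᶜ := Nat.cast_pos.2 (card_pos.2 ⟨d.castSucc, by simp⟩)
  rw [lt_div_iff₀' hcard, div_lt_iff₀' hcard, le_div_iff₀' hcard', ← nsmul_eq_mul, ← nsmul_eq_mul,
    ← nsmul_eq_mul, ← sum_const, ← sum_const, ← sum_const]
  refine ⟨sum_lt_sum (fun i _ => hz (Fin.le_last i)) ⟨d.succ, mem_Ici.2 le_rfl, hd⟩,
    sum_lt_sum (fun i hi => hz (mem_Ici.1 hi)) ⟨Fin.last n, mem_Ici.2 (Fin.le_last _), hd⟩, ?_⟩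
  calc ∑ _ ∈ (Ici d.succ)ᶜ, z d.succ ≤ ∑ i ∈ (Ici d.succ)ᶜ, z i :=
        sum_le_sum fun i hi => hz (not_le.1 (mt mem_Ici.2 (mem_compl.1 hi))).le
    _ ≤ 1 - ∑ i ∈ Ici d.succ, z i := by linarith [sum_add_sum_compl (Ici d.succ) z]

-- Lowering the mass of the tail below that of `z` breaks super-majorization at once.
theorem twoLevel_mem_closure (hz : Antitone z) {d : Fin n} {s : ℝ} (hs : 0 < s)
    (hlevels : s / #(Ici d.succ) ≤ (1 - s) / #(Ici d.succ)ᶜ) (hsz : s ≤ ∑ i ∈ Ici d.succ, z i) :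
    twoLevel (Ici d.succ) s ∈ closure (Vn (n + 1) ∩ {x | ¬SupMaj x z}) := by
  refine mem_closure_iff.2 fun o ho hso => ?_
  obtain ⟨r, hrs, hr⟩ := (((ho.preimage (continuous_twoLevel _)).eventually_mem hso).and
    (lt_mem_nhds hs)).exists_lt
  have hVn : twoLevel (Ici d.succ) r ∈ Vn (n + 1) := twoLevel_Ici_mem_Vn d hr.2.le <|
    calc r / #(Ici d.succ) ≤ s / #(Ici d.succ) := by gcongr
      _ ≤ (1 - s) / #(Ici d.succ)ᶜ := hlevels
      _ ≤ (1 - r) / #(Ici d.succ)ᶜ := by gcongr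
  refine ⟨_, hr.1, hVn, fun h => ?_⟩
  have htail := (supMaj_iff_sum_Ici_le hVn.2.2 hz).1 h d.succ
  rw [sum_twoLevel nonempty_Ici] at htail
  linarith

theorem exists_gapMaj_mem_closure (hz : Antitone z) (hpos : ∀ i, 0 < z i) (hsum : ∑ i, z i < 1)
    {d : Fin n} (hd : z (Fin.last n) < z d.succ) :
    ∃ x ∈ closure (Vn (n + 1) ∩ {x | ¬SupMaj x z}), x (Fin.last n) < z d.succ ∧
      GapMaj x z (z (Fin.last n)) (z d.succ) (z d.castSucc) := by
  obtain ⟨hlow, hup, hlevel⟩ := tail_mean_bounds hz hd hsum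
  have hlevels := hup.le.trans hlevel
  refine ⟨_, twoLevel_mem_closure hz (sum_pos (fun i _ => hpos i) nonempty_Ici) hlevels le_rfl, ?_,
    gapMaj_twoLevel (by simp) (by simp) hsum hlow hlevels⟩
  rwa [twoLevel_of_mem (mem_Ici.2 (Fin.le_last _))]

theorem exists_supMaj_of_mem_closure {N : ℕ} {A : Set (Fin n → ℝ)} {x : Fin n → ℝ}
    {Φ : (Fin n → ℝ) → Fin N → ℝ} {y : Fin N → ℝ} (hx : x ∈ closure A) (hΦ : Continuous Φ)
    (h : SSupMaj (Φ x) y) : ∃ x' ∈ A, SupMaj (Φ x') y := by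
  obtain ⟨x', h', hx'⟩ := mem_closure_iff.1 hx _ ((isOpen_setOf_sSupMaj y).preimage hΦ) h
  exact ⟨x', hx', SSupMaj.supMaj h'⟩

theorem last_lt_succ_of_pow_mul_lt {d : Fin n} (hz : Antitone z) (hpos : ∀ i, 0 < z i)
    (hd : z (Fin.last n) ^ k * z d.castSucc < z d.succ ^ (k + 1)) :
    z (Fin.last n) < z d.succ := by
  refine lt_of_pow_lt_pow_left₀ k (hpos _).le (lt_of_mul_lt_mul_right ?_ (hpos d.succ).le)
  calc z (Fin.last n) ^ k * z d.succ ≤ z (Fin.last n) ^ k * z d.castSucc :=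
        mul_le_mul_of_nonneg_left (hz (Fin.castSucc_le_succ d)) (pow_nonneg (hpos _).le k)
    _ < z d.succ ^ k * z d.succ := by rwa [← pow_succ]

theorem exists_tensor_supMaj_of_not_ratioBound (hz : Antitone z) (hpos : ∀ i, 0 < z i)
    (hsum : ∑ i, z i < 1) (h : ¬RatioBound k z) :
    ∃ x ∈ Vn (n + 1), ¬SupMaj x z ∧ ∃ c : Fin (k + 1) → ℝ, (∀ j, 0 < c j) ∧ Antitone c ∧
      SupMaj (tensor x c) (tensor z c) := by
  simp only [RatioBound, not_forall, not_le] at h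
  obtain ⟨d, hd⟩ := h
  obtain ⟨x, hx, -, hgap⟩ :=
    exists_gapMaj_mem_closure hz hpos hsum (last_lt_succ_of_pow_mul_lt hz hpos hd)
  obtain ⟨α, hα, hα1, hαu, hαp⟩ :=
    exists_pow_mul_lt (hpos _) (hpos _) (hz (Fin.castSucc_le_succ d)) hd
  obtain ⟨x', ⟨hx', hnot⟩, hmaj⟩ := exists_supMaj_of_mem_closure hx
    (continuous_tensor _) (hgap.sSupMaj_tensor (hpos _).le hα hα1 hαu hαp)
  exact ⟨x', hx', hnot, _, fun j => pow_pos hα _,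
    fun i j hij => pow_le_pow_of_le_one hα.le hα1 hij, hmaj⟩

theorem exists_tpow_supMaj_of_not_ratioBound (hz : Antitone z) (hpos : ∀ i, 0 < z i)
    (hsum : ∑ i, z i < 1) (h : ¬RatioBound k z) :
    ∃ x ∈ Vn (n + 1), ¬SupMaj x z ∧ SupMaj (tpow x (k + 1)) (tpow z (k + 1)) := by
  simp only [RatioBound, not_forall, not_le] at h
  obtain ⟨d, hd⟩ := h
  obtain ⟨x, hx, hlast, hgap⟩ :=
    exists_gapMaj_mem_closure hz hpos hsum (last_lt_succ_of_pow_mul_lt hz hpos hd)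
  obtain ⟨x', ⟨hx', hnot⟩, hmaj⟩ := exists_supMaj_of_mem_closure hx
    (continuous_tpow (k + 1)) (hgap.sSupMaj_tpow hpos hlast hd)
  exact ⟨x', hx', hnot, hmaj⟩

end Necessity

section Equalities

variable {n k : ℕ} {lam : ℝ} {x y : Fin n → ℝ}

theorem mem_Mklam_iff : x ∈ Mklam k lam y ↔ x ∈ Vn n ∧ SupMaj (tpow x k) (tpow (lam • y) k) := by
  rw [smul_tpow]
  rfl

theorem mem_Tklam_iff : x ∈ Tklam (k + 1) lam y ↔ x ∈ Vn n ∧ ∃ c : Fin (k + 1) → ℝ,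
    (∀ i, 0 < c i) ∧ Antitone c ∧ SupMaj (tensor x c) (tensor (lam • y) c) := by
  refine and_congr_right fun _ => ⟨?_, ?_⟩
  · rintro ⟨c, hc0, -, hc, h⟩
    exact ⟨c, hc0, hc, (smul_tensor lam y c).symm ▸ h⟩
  · rintro ⟨c, hc0, hc, h⟩
    have hw : 0 < (∑ i, c i)⁻¹ := inv_pos.2 (Finset.sum_pos (fun i _ => hc0 i) Finset.univ_nonempty)
    refine ⟨(∑ i, c i)⁻¹ • c, fun i => mul_pos hw (hc0 i), ?_, hc.const_mul hw.le, ?_⟩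
    · simp only [Pi.smul_apply, smul_eq_mul, ← Finset.mul_sum]
      exact inv_mul_cancel₀ (inv_pos.1 hw).ne'
    · change SupMaj _ (lam • tensor y _)
      rwa [← smul_tensor, tensor_smul, tensor_smul, supMaj_smul_iff hw]

theorem Slam_subset_Tklam : Slam lam y ⊆ Tklam (k + 1) lam y := fun _ hx =>
  mem_Tklam_iff.2 ⟨hx.1, 1, fun _ => one_pos, antitone_const, hx.2.tensor zero_le_one⟩

theorem Slam_subset_Mklam (hlam : 0 ≤ lam) (hy : 0 ≤ y) : Slam lam y ⊆ Mklam k lam y := fun _ hx =>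
  mem_Mklam_iff.2 ⟨hx.1, hx.2.tpow hx.1.1 (smul_nonneg hlam hy) k⟩

theorem sum_smul_of_mem_Vn (hy : y ∈ Vn n) : ∑ i, (lam • y) i = lam := by
  simp only [Pi.smul_apply, smul_eq_mul, ← Finset.mul_sum, hy.2.1, mul_one]

theorem Tklam_eq_Slam_iff {y : Fin (n + 1) → ℝ} (hlam : 0 < lam) (hlam1 : lam < 1)
    (hy : y ∈ Vn (n + 1)) (hpos : ∀ i, 0 < y i) :
    Tklam (k + 1) lam y = Slam lam y ↔ RatioBound k y := by
  have hz : Antitone (lam • y) := hy.2.2.const_mul hlam.le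
  have hz0 : ∀ i, 0 < (lam • y) i := fun i => mul_pos hlam (hpos i)
  have hsum : ∑ i, (lam • y) i < 1 := (sum_smul_of_mem_Vn hy).trans_lt hlam1
  rw [← ratioBound_smul_iff hlam]
  refine ⟨fun heq => ?_, fun h => Slam_subset_Tklam.antisymm' fun x hx => ?_⟩
  · by_contra h
    obtain ⟨x, hx, hnot, hcat⟩ := exists_tensor_supMaj_of_not_ratioBound hz hz0 hsum h
    exact hnot (heq.subset (mem_Tklam_iff.2 ⟨hx, hcat⟩)).2
  · obtain ⟨hxV, c, hc0, hc, hmaj⟩ := mem_Tklam_iff.1 hx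
    exact ⟨hxV, h.supMaj_of_tensor hz hz0 hxV.2.2 (hsum.le.trans_eq hxV.2.1.symm) hc0 hc hmaj⟩

theorem Mklam_eq_Slam_iff {y : Fin (n + 1) → ℝ} (hlam : 0 < lam) (hlam1 : lam < 1)
    (hy : y ∈ Vn (n + 1)) (hpos : ∀ i, 0 < y i) :
    Mklam (k + 1) lam y = Slam lam y ↔ RatioBound k y := by
  have hz : Antitone (lam • y) := hy.2.2.const_mul hlam.le
  have hz0 : ∀ i, 0 < (lam • y) i := fun i => mul_pos hlam (hpos i)
  have hsum : ∑ i, (lam • y) i < 1 := (sum_smul_of_mem_Vn hy).trans_lt hlam1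
  rw [← ratioBound_smul_iff hlam]
  refine ⟨fun heq => ?_, fun h => (Slam_subset_Mklam hlam.le hy.1).antisymm' fun x hx => ?_⟩
  · by_contra h
    obtain ⟨x, hx, hnot, hpow⟩ := exists_tpow_supMaj_of_not_ratioBound hz hz0 hsum h
    exact hnot (heq.subset (mem_Mklam_iff.2 ⟨hx, hpow⟩)).2
  · obtain ⟨hxV, hmaj⟩ := mem_Mklam_iff.1 hx
    exact ⟨hxV, h.supMaj_of_tpow hz (fun i => (hz0 i).le) hxV.2.2 hxV.1
      (hsum.le.trans_eq hxV.2.1.symm) hmaj⟩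

end Equalities

/-- Theorem 4 of the paper. The equivalence of
`T_k^λ(y) = S^λ(y)`, `M_k^λ(y) = S^λ(y)`, and `y_{d+1}^k ≤ y_n^{k-1} y_d`
for all `0 < d < n-1` (1-based indices in the informal statement). -/
theorem stmt3 {n k : ℕ} (hk : 0 < k) (lam : ℝ) (hlam : 0 < lam ∧ lam < 1)
    (y : Fin n → ℝ) (hy : y ∈ Vn n) (hypos : ∀ i, 0 < y i) :
    (Tklam k lam y = Slam lam y ↔ Mklam k lam y = Slam lam y) ∧
    (Tklam k lam y = Slam lam y ↔ ∀ (d : ℕ) (hd1 : 0 < d) (hd2 : d + 1 < n),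
      y ⟨d, by omega⟩ ^ k ≤ y ⟨n - 1, by omega⟩ ^ (k - 1) * y ⟨d - 1, by omega⟩) := by
  obtain ⟨k, rfl⟩ := Nat.exists_eq_add_one.2 hk
  obtain _ | n := n
  · simp [Vn] at hy
  rw [Tklam_eq_Slam_iff hlam.1 hlam.2 hy hypos, Mklam_eq_Slam_iff hlam.1 hlam.2 hy hypos]
  exact ⟨Iff.rfl, ratioBound_iff_forall_nat hy.2.2 (hypos _).le⟩

end
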